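/- Let H be a finitely generated projective Hopf k-algebra and set P := (∫ℓ_{H*})*, the k-dual of the module of left integrals in H*. Then H is a P-Frobenius algebra, with Frobenius homomorphism ψ : H → P satisfying Σ a₍₁₎ ⊗ ψ(a₍₂₎) = 1 ⊗ ψ(a) in H ⊗ P for all a ∈ H. -/

import Mathlib

open scoped TensorProduct

/-- The convolution product on the dual of a coalgebra: `(g * f)(a) = Σ g(a₍₁₎) f(a₍₂₎)`. -/
noncomputable def conv (k H : Type*) [CommRing k] [AddCommGroup H] [Module k H]
    [Coalgebra k H] (g f : Module.Dual k H) : Module.Dual k H :=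
  LinearMap.mul' k k ∘ₗ TensorProduct.map g f ∘ₗ Coalgebra.comul

/-- The Frobenius homomorphism `ψ : H → P = J*` (for `J ⊆ H*` the module of left
integrals), given by `ψ(a)(q) = q(a)`. -/
noncomputable def psiH (k H : Type*) [CommRing k] [Ring H] [HopfAlgebra k H]
    (J : Submodule k (Module.Dual k H)) : H →ₗ[k] Module.Dual k ↥J :=
  (Submodule.subtype J).dualMap ∘ₗ Module.Dual.eval k H

/-!
The dual `H*` is a right Hopf module over `H`: `H` acts by `(f, h) ↦ f(– S(h))`, and the coaction
is adjoint to `a ↦ Σ a₍₁₎ f(a₍₂₎)`. Its coinvariants are the left integrals `J`, so the fundamental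
theorem of Hopf modules gives an isomorphism `J ⊗ H ≃ H*`. Since `1 : H` is split by the counit,
this isomorphism forces `J` to be invertible. Dualizing it gives
`H ≃ Hom(H, J*)`, `a ↦ (h ↦ ψ(a S(h)))`; because `J*` is invertible, exchanging the roles of `a`
and `h` preserves bijectivity, so `h ↦ ψ(– S(h))` is bijective. Hence `h ↦ ψ(– h)` is surjective,
and a surjection between isomorphic finite modules is bijective.
-/

open Coalgebra HopfAlgebra

section InvertibleModules

section CommSemiring

variable {k M N P : Type*} [CommSemiring k] [AddCommMonoid M] [Module k M] [AddCommMonoid N]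
  [Module k N] [AddCommMonoid P] [Module k P]

theorem apply_mem_range_contractLeft (φ : P ⊗[k] M →ₗ[k] k) (t : P ⊗[k] M) :
    φ t ∈ (contractLeft k P).range := by
  induction t with
  | zero => simp only [map_zero, zero_mem]
  | add x y hx hy => simpa only [map_add] using add_mem hx hy
  | tmul p m => exact ⟨(φ ∘ₗ (TensorProduct.mk k P M).flip m) ⊗ₜ p, rfl⟩

theorem injective_of_injective_rTensor {f : N →ₗ[k] P} {r : M →ₗ[k] k} {m : M} (hrm : r m = 1)
    (hf : Function.Injective (f.rTensor M)) : Function.Injective f := by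
  intro x y hxy
  have tmul_eq : x ⊗ₜ[k] m = y ⊗ₜ[k] m := hf (by simp only [LinearMap.rTensor_tmul, hxy])
  simpa [hrm] using congrArg (TensorProduct.rid k N ∘ r.lTensor N) tmul_eq

theorem finite_and_projective_of_tensor_equiv [Module.Finite k N] [Module.Projective k N]
    {r : M →ₗ[k] k} {m : M} (hrm : r m = 1) (e : P ⊗[k] M ≃ₗ[k] N) :
    Module.Finite k P ∧ Module.Projective k P := by
  let i : P →ₗ[k] N := e.toLinearMap ∘ₗ (TensorProduct.mk k P M).flip m
  let s : N →ₗ[k] P := (TensorProduct.rid k P).toLinearMap ∘ₗ r.lTensor P ∘ₗ e.symm.toLinearMap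
  have hsi : s ∘ₗ i = .id := by ext p; simp [s, i, hrm]
  exact ⟨.of_surjective s fun p => ⟨i p, congr($hsi p)⟩, .of_split i s hsi⟩

/-- The chain `(P* ⊗ P) ⊗ M ≃ P* ⊗ M* ≃ Hom(P, M*) ≃ (P ⊗ M)* ≃ M** ≃ M` obtained by using
`e : P ⊗ M ≃ M*` twice. It makes `P* ⊗ P` behave like `k` after tensoring with `M`. -/
noncomputable def dualTensorTensorEquiv [Module.Finite k M] [Module.Projective k M]
    [Module.Finite k P] [Module.Projective k P] (e : P ⊗[k] M ≃ₗ[k] Module.Dual k M) :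
    (Module.Dual k P ⊗[k] P) ⊗[k] M ≃ₗ[k] M :=
  TensorProduct.assoc k _ P M ≪≫ₗ e.lTensor (Module.Dual k P) ≪≫ₗ
    dualTensorHomEquiv k P (Module.Dual k M) ≪≫ₗ TensorProduct.lift.equiv (.id k) P M k ≪≫ₗ
    e.symm.dualMap ≪≫ₗ (Module.evalEquiv k M).symm

theorem bijective_applyₗ [Module.Finite k M] [Module.Projective k M] [Module.Invertible k P] :
    Function.Bijective (LinearMap.applyₗ : M →ₗ[k] (M →ₗ[k] P) →ₗ[k] P) := by
  let scalarEquiv : k ≃ₗ[k] P →ₗ[k] P :=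
    .ofBijective (LinearMap.lsmul k P) (Module.Invertible.toModuleEnd_bijective k P)
  let e : M ≃ₗ[k] (M →ₗ[k] P) →ₗ[k] P :=
    Module.evalEquiv k M ≪≫ₗ scalarEquiv.congrRight ≪≫ₗ
      TensorProduct.lift.equiv (.id k) (Module.Dual k M) P P ≪≫ₗ
      (dualTensorHomEquiv k M P).congrLeft P k
  have applyₗ_eq : LinearMap.applyₗ = e.toLinearMap := LinearMap.ext fun m =>
    (LinearEquiv.eq_comp_toLinearMap_symm _ _).2 (TensorProduct.ext' fun f p => rfl)
  exact applyₗ_eq ▸ e.bijective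

theorem bijective_flip [Module.Finite k M] [Module.Projective k M] [Module.Invertible k P]
    {B : N →ₗ[k] M →ₗ[k] P} (hB : Function.Bijective B) : Function.Bijective B.flip :=
  ((LinearEquiv.ofBijective B hB).symm.congrLeft P k).bijective.comp bijective_applyₗ

theorem bijective_lflip_comp_curry_flip [Module.Finite k M] [Module.Projective k M]
    [Module.Finite k N] [Module.Projective k N] [Module.Invertible k P]
    (e : P ⊗[k] M ≃ₗ[k] Module.Dual k N) :
    Function.Bijective (LinearMap.lflip.toLinearMap ∘ₗ (TensorProduct.curry e.toLinearMap).flip :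
      M →ₗ[k] N →ₗ[k] Module.Dual k P) := by
  let homEquiv : N ≃ₗ[k] M →ₗ[k] Module.Dual k P :=
    Module.evalEquiv k N ≪≫ₗ e.dualMap ≪≫ₗ (TensorProduct.lift.equiv (.id k) P M k).symm ≪≫ₗ
      LinearMap.lflip
  exact bijective_flip homEquiv.bijective

end CommSemiring

theorem invertible_of_tensor_equiv_dual {k M P : Type*} [CommRing k] [AddCommGroup M] [Module k M]
    [AddCommGroup P] [Module k P] [Module.Finite k M] [Module.Projective k M]
    {r : M →ₗ[k] k} {m : M} (hrm : r m = 1) (e : P ⊗[k] M ≃ₗ[k] Module.Dual k M) :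
    Module.Invertible k P := by
  obtain ⟨_, _⟩ := finite_and_projective_of_tensor_equiv hrm e
  have contract_surjective : Function.Surjective (contractLeft k P) := by
    rw [← LinearMap.range_eq_top, Ideal.eq_top_iff_one]
    simpa [hrm] using apply_mem_range_contractLeft (LinearMap.applyₗ m ∘ₗ e.toLinearMap) (e.symm r)
  have contract_rTensor_injective : Function.Injective ((contractLeft k P).rTensor M) :=
    OrzechProperty.injective_of_surjective_of_injective
      (dualTensorTensorEquiv e ≪≫ₗ (TensorProduct.lid k M).symm).toLinearMap _
      (LinearEquiv.injective _) (LinearMap.rTensor_surjective M contract_surjective)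
  exact ⟨injective_of_injective_rTensor hrm contract_rTensor_injective, contract_surjective⟩

end InvertibleModules

section AntipodeComul

open WithConv Algebra.TensorProduct

variable {k H B : Type*} [CommSemiring k] [Semiring H] [HopfAlgebra k H] [Semiring B] [Algebra k B]

theorem convMul_comp_antipode (φ : H →ₐ[k] B) :
    toConv φ.toLinearMap * toConv (φ.toLinearMap ∘ₗ antipode k) = 1 := by
  ext h
  simp only [(ℛ k h).convMul_apply, LinearMap.comp_apply, AlgHom.toLinearMap_apply, ← map_mul,
    ← map_sum, sum_mul_antipode_eq_algebraMap_counit (ℛ k h), AlgHom.commutes,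
    LinearMap.convOne_apply]

theorem comp_antipode_convMul (φ : H →ₐ[k] B) :
    toConv (φ.toLinearMap ∘ₗ antipode k) * toConv φ.toLinearMap = 1 := by
  ext h
  simp only [(ℛ k h).convMul_apply, LinearMap.comp_apply, AlgHom.toLinearMap_apply, ← map_mul,
    ← map_sum, sum_antipode_mul_eq_algebraMap_counit (ℛ k h), AlgHom.commutes,
    LinearMap.convOne_apply]

theorem toConv_comul : toConv (comul (R := k) (A := H)) =
    toConv (includeLeft (R := k) (S := k) (A := H) (B := H)).toLinearMap *
      toConv (includeRight (R := k) (A := H) (B := H)).toLinearMap := by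
  ext h
  simp [(ℛ k h).convMul_apply, (ℛ k h).eq]

theorem sum_one_tmul_mul_comul_antipode {h : H} {ι : Type*} (r : Coalgebra.Repr k h ι) :
    ∑ i ∈ r.index, (1 ⊗ₜ[k] r.left i) * comul (R := k) (antipode k (r.right i)) =
      antipode k h ⊗ₜ[k] 1 := by
  have includeRight_convMul : toConv (includeRight (R := k) (A := H) (B := H)).toLinearMap *
      toConv (comul ∘ₗ antipode k) =
        toConv ((includeLeft (R := k) (S := k) (A := H) (B := H)).toLinearMap ∘ₗ antipode k) :=
    calc
      _ = toConv ((includeLeft (R := k) (S := k) (A := H) (B := H)).toLinearMap ∘ₗ antipode k) *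
          (toConv (comul (R := k)) * toConv (comul ∘ₗ antipode k)) := by
        rw [toConv_comul, ← mul_assoc, ← mul_assoc, comp_antipode_convMul, one_mul]
      _ = _ := by rw [LinearMap.comul_right_inv, mul_one]
  simpa [r.convMul_apply] using congr($includeRight_convMul h)

theorem sum_comul_antipode_mul_tmul_one {h : H} {ι : Type*} (r : Coalgebra.Repr k h ι) :
    ∑ i ∈ r.index, comul (R := k) (antipode k (r.left i)) * (r.right i ⊗ₜ[k] 1) =
      1 ⊗ₜ[k] antipode k h := by
  have comul_left_inv : toConv (comul ∘ₗ antipode k) * toConv (comul (R := k) (A := H)) = 1 :=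
    comp_antipode_convMul (Bialgebra.comulAlgHom k H)
  have convMul_includeLeft : toConv (comul ∘ₗ antipode k) *
      toConv (includeLeft (R := k) (S := k) (A := H) (B := H)).toLinearMap =
        toConv ((includeRight (R := k) (A := H) (B := H)).toLinearMap ∘ₗ antipode k) :=
    calc
      _ = toConv (comul ∘ₗ antipode k) * toConv (comul (R := k)) *
          toConv ((includeRight (R := k) (A := H) (B := H)).toLinearMap ∘ₗ antipode k) := by
        rw [toConv_comul, mul_assoc, mul_assoc, convMul_comp_antipode, mul_one]
      _ = _ := by rw [comul_left_inv, one_mul]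
  simpa [r.convMul_apply] using congr($convMul_includeLeft h)

end AntipodeComul

/-- A right Hopf module over a bialgebra `H`: a right `H`-module structure `act` and a right
`H`-comodule structure `coact` on `M` such that `coact` is `H`-linear for the diagonal action on
`M ⊗ H`. The action is a field rather than a `Module` instance, so that `H*` can be given its
antipode-twisted action without a type synonym. -/
structure HopfModule (k H M : Type*) [CommSemiring k] [Semiring H] [Bialgebra k H]
    [AddCommMonoid M] [Module k M] where
  act : M →ₗ[k] H →ₗ[k] M
  coact : M →ₗ[k] M ⊗[k] H
  act_one (m : M) : act m 1 = m
  act_act (m : M) (h h' : H) : act (act m h) h' = act m (h * h')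
  rTensor_coact_coact (m : M) : coact.rTensor H (coact m) =
    (TensorProduct.assoc k M H H).symm (comul.lTensor M (coact m))
  lTensor_counit_coact (m : M) : counit.lTensor M (coact m) = m ⊗ₜ 1
  coact_act (m : M) (h : H) :
    coact (act m h) = TensorProduct.map₂ act (LinearMap.mul k H) (coact m) (comul h)

namespace HopfModule

section Bialgebra

variable {k H M : Type*} [CommSemiring k] [Semiring H] [Bialgebra k H]
  [AddCommMonoid M] [Module k M] (X : HopfModule k H M)

/-- The submodule of elements `m` with `coact m = m ⊗ 1`. -/
def coinvariants : Submodule k M :=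
  LinearMap.eqLocus X.coact ((TensorProduct.mk k M H).flip 1)

variable {X} in
theorem mem_coinvariants {m : M} : m ∈ X.coinvariants ↔ X.coact m = m ⊗ₜ 1 := Iff.rfl

theorem map₂_act_mul_tmul (m : M) (h : H) (t : H ⊗[k] H) :
    TensorProduct.map₂ X.act (LinearMap.mul k H) (m ⊗ₜ h) t =
      (X.act m).rTensor H ((1 ⊗ₜ h) * t) := by
  induction t with
  | zero => simp only [map_zero, mul_zero]
  | add a b ha hb => simp only [map_add, mul_add, ha, hb]
  | tmul a b => simp

variable {X} in
theorem coact_act_of_mem_coinvariants {m : M} (hm : m ∈ X.coinvariants) (h : H) :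
    X.coact (X.act m h) = (X.act m).rTensor H (comul h) := by
  rw [X.coact_act, mem_coinvariants.1 hm, map₂_act_mul_tmul, ← Algebra.TensorProduct.one_def,
    one_mul]

end Bialgebra

variable {k H M : Type*} [CommSemiring k] [Semiring H] [HopfAlgebra k H]
  [AddCommMonoid M] [Module k M] (X : HopfModule k H M)

/-- The map `m ⊗ h ↦ m · S(h)`, whose composite with the coaction projects onto the
coinvariants. -/
noncomputable def antipodeAct : M ⊗[k] H →ₗ[k] M :=
  TensorProduct.lift X.act ∘ₗ (antipode k).lTensor M

@[simp]
theorem antipodeAct_tmul (m : M) (h : H) : X.antipodeAct (m ⊗ₜ h) = X.act m (antipode k h) := rfl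

theorem coact_antipodeAct (t : M ⊗[k] H) :
    X.coact (X.antipodeAct t) = TensorProduct.lift (TensorProduct.map₂ X.act (LinearMap.mul k H))
      ((comul ∘ₗ antipode k).lTensor (M ⊗[k] H) (X.coact.rTensor H t)) := by
  induction t with
  | zero => simp only [map_zero]
  | add a b ha hb => simp only [map_add, ha, hb]
  | tmul m h => simp [X.coact_act]

theorem lift_map₂_act_comul_antipode_comul (t : M ⊗[k] H) :
    TensorProduct.lift (TensorProduct.map₂ X.act (LinearMap.mul k H))
      ((comul ∘ₗ antipode k).lTensor (M ⊗[k] H)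
        ((TensorProduct.assoc k M H H).symm (comul.lTensor M t))) =
      X.antipodeAct t ⊗ₜ 1 := by
  induction t with
  | zero => simp only [map_zero, TensorProduct.zero_tmul]
  | add a b ha hb => simp only [map_add, ha, hb, TensorProduct.add_tmul]
  | tmul m h =>
    rw [LinearMap.lTensor_tmul, ← (ℛ k h).eq]
    simp only [TensorProduct.tmul_sum, map_sum, TensorProduct.assoc_symm_tmul,
      LinearMap.lTensor_tmul, TensorProduct.lift.tmul, LinearMap.comp_apply, map₂_act_mul_tmul]
    rw [← map_sum, sum_one_tmul_mul_comul_antipode, LinearMap.rTensor_tmul, antipodeAct_tmul]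

theorem antipodeAct_coact_mem_coinvariants (m : M) :
    X.antipodeAct (X.coact m) ∈ X.coinvariants := by
  rw [mem_coinvariants, coact_antipodeAct, X.rTensor_coact_coact,
    lift_map₂_act_comul_antipode_comul]

/-- The projection `m ↦ Σ m₍₀₎ · S(m₍₁₎)` onto the coinvariants. -/
noncomputable def proj : M →ₗ[k] X.coinvariants :=
  (X.antipodeAct ∘ₗ X.coact).codRestrict _ X.antipodeAct_coact_mem_coinvariants

theorem coe_proj (m : M) : (X.proj m : M) = X.antipodeAct (X.coact m) := rfl

theorem proj_act (m : X.coinvariants) (h : H) : X.proj (X.act m h) = counit (R := k) h • m := by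
  ext
  rw [coe_proj, coact_act_of_mem_coinvariants m.2, ← (ℛ k h).eq]
  simp only [map_sum, LinearMap.rTensor_tmul, antipodeAct_tmul, X.act_act]
  rw [← map_sum, sum_mul_antipode_eq_smul, map_smul, X.act_one, Submodule.coe_smul]

theorem rTensor_proj_coact_act (m : X.coinvariants) (h : H) :
    X.proj.rTensor H (X.coact (X.act m h)) = m ⊗ₜ h := by
  rw [coact_act_of_mem_coinvariants m.2, ← (ℛ k h).eq]
  simp only [map_sum, LinearMap.rTensor_tmul, proj_act, TensorProduct.smul_tmul]
  rw [← TensorProduct.tmul_sum, sum_counit_smul]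

theorem lift_act_antipodeAct_comul (t : M ⊗[k] H) :
    TensorProduct.lift X.act (X.antipodeAct.rTensor H
      ((TensorProduct.assoc k M H H).symm (comul.lTensor M t))) =
        TensorProduct.rid k M (counit.lTensor M t) := by
  induction t with
  | zero => simp only [map_zero]
  | add a b ha hb => simp only [map_add, ha, hb]
  | tmul m h =>
    rw [LinearMap.lTensor_tmul, ← (ℛ k h).eq]
    simp only [TensorProduct.tmul_sum, map_sum, TensorProduct.assoc_symm_tmul,
      LinearMap.rTensor_tmul, TensorProduct.lift.tmul, antipodeAct_tmul, X.act_act]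
    rw [← map_sum, sum_antipode_mul_eq_smul, map_smul, X.act_one, LinearMap.lTensor_tmul,
      TensorProduct.rid_tmul]

theorem lift_act_rTensor_proj_coact (m : M) :
    TensorProduct.lift (X.act ∘ₗ X.coinvariants.subtype) (X.proj.rTensor H (X.coact m)) = m := by
  calc
    _ = TensorProduct.lift X.act (X.antipodeAct.rTensor H (X.coact.rTensor H (X.coact m))) := by
      induction X.coact m with
      | zero => simp only [map_zero]
      | add a b ha hb => simp only [map_add, ha, hb]
      | tmul m h => rfl
    _ = m := by
      rw [X.rTensor_coact_coact, lift_act_antipodeAct_comul, X.lTensor_counit_coact,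
        TensorProduct.rid_tmul, one_smul]

/-- The fundamental theorem of Hopf modules: `m ⊗ h ↦ m · h` is an isomorphism from the tensor
product of the coinvariants with `H` onto the whole module. -/
noncomputable def coinvariantsTensorEquiv : X.coinvariants ⊗[k] H ≃ₗ[k] M :=
  .ofLinearMap (TensorProduct.lift (X.act ∘ₗ X.coinvariants.subtype))
    (X.proj.rTensor H ∘ₗ X.coact)
    (LinearMap.ext X.lift_act_rTensor_proj_coact) (TensorProduct.ext' X.rTensor_proj_coact_act)

end HopfModule

section Hit

variable {k C : Type*} [CommSemiring k] [AddCommMonoid C] [Module k C] [Coalgebra k C]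

/-- The action `(g, a) ↦ g ⇀ a = Σ a₍₁₎ g(a₍₂₎)` of the dual of a coalgebra on the coalgebra,
adjoint to convolution. -/
noncomputable def hit : Module.Dual k C →ₗ[k] C →ₗ[k] C where
  toFun g := (TensorProduct.rid k C).toLinearMap ∘ₗ g.lTensor C ∘ₗ comul
  map_add' f g := by ext; simp [LinearMap.lTensor_add]
  map_smul' c g := by ext; simp [LinearMap.lTensor_smul]

theorem hit_apply (g : Module.Dual k C) (a : C) :
    hit g a = TensorProduct.rid k C (g.lTensor C (comul a)) := rfl

theorem comul_hit (g : Module.Dual k C) (a : C) :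
    comul (hit g a) = (hit g).lTensor C (comul (R := k) a) := by
  have slice_assoc (t : (C ⊗[k] C) ⊗[k] C) : TensorProduct.rid k (C ⊗[k] C) (g.lTensor _ t) =
      ((TensorProduct.rid k C).toLinearMap ∘ₗ g.lTensor C).lTensor C
        (TensorProduct.assoc k C C C t) := by
    induction t with
    | zero => simp only [map_zero]
    | add x y hx hy => simp only [map_add, hx, hy]
    | tmul s c =>
      induction s with
      | zero => simp only [TensorProduct.zero_tmul, map_zero]
      | add x y hx hy => simp only [TensorProduct.add_tmul, map_add, hx, hy]
      | tmul a b => simp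
  have comul_slice (t : C ⊗[k] C) : comul (TensorProduct.rid k C (g.lTensor C t)) =
      TensorProduct.rid k (C ⊗[k] C) (g.lTensor _ (comul.rTensor C t)) := by
    induction t with
    | zero => simp only [map_zero]
    | add x y hx hy => simp only [map_add, hx, hy]
    | tmul a b => simp
  rw [hit_apply, comul_slice, slice_assoc, coassoc_apply, ← LinearMap.lTensor_comp_apply]
  rfl

theorem counit_hit (g : Module.Dual k C) (a : C) : counit (R := k) (hit g a) = g a := by
  conv_rhs => rw [← sum_counit_smul (ℛ k a)]
  rw [hit_apply, ← (ℛ k a).eq]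
  simp [mul_comm]

end Hit

section DualHopfModule

variable {k H : Type*} [CommSemiring k] [Semiring H] [HopfAlgebra k H]

theorem sum_hit_mul_antipode_mul (g : Module.Dual k H) (a : H) {h : H} {ι : Type*}
    (r : Coalgebra.Repr k h ι) :
    ∑ i ∈ r.index, hit g (a * antipode k (r.left i)) * r.right i =
      hit (g ∘ₗ LinearMap.mulRight k (antipode k h)) a := by
  have slice_mul (t : H ⊗[k] H) (y : H) : TensorProduct.rid k H (g.lTensor H t) * y =
      TensorProduct.rid k H (g.lTensor H (t * (y ⊗ₜ 1))) := by
    induction t with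
    | zero => simp only [map_zero, zero_mul]
    | add s t hs ht => simp only [map_add, add_mul, hs, ht]
    | tmul b c => simp
  have lTensor_mul_one_tmul (t : H ⊗[k] H) (y : H) : g.lTensor H (t * (1 ⊗ₜ y)) =
      (g ∘ₗ LinearMap.mulRight k y).lTensor H t := by
    induction t with
    | zero => simp only [map_zero, zero_mul]
    | add s t hs ht => simp only [map_add, add_mul, hs, ht]
    | tmul b c => simp
  simp only [hit_apply, Bialgebra.comul_mul, slice_mul, mul_assoc]
  rw [← map_sum, ← map_sum, ← Finset.mul_sum, sum_comul_antipode_mul_tmul_one,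
    lTensor_mul_one_tmul]

variable (k H) in
/-- The right action of `H` on `H*` given by `(g · h)(a) = g(a S(h))`. -/
noncomputable def dualAct : Module.Dual k H →ₗ[k] H →ₗ[k] Module.Dual k H :=
  (LinearMap.llcomp k H H k).compl₂ ((LinearMap.mul k H).flip ∘ₗ antipode k)

theorem dualAct_apply (g : Module.Dual k H) (h : H) :
    dualAct k H g h = g ∘ₗ LinearMap.mulRight k (antipode k h) := rfl

theorem dualTensorHom_map₂_dualAct (t : Module.Dual k H ⊗[k] H) (x y a : H) :
    dualTensorHom k H H (TensorProduct.map₂ (dualAct k H) (LinearMap.mul k H) t (x ⊗ₜ y)) a =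
      dualTensorHom k H H t (a * antipode k x) * y := by
  induction t with
  | zero => simp only [map_zero, LinearMap.zero_apply, zero_mul]
  | add s t hs ht => simp only [map_add, LinearMap.add_apply, hs, ht, add_mul]
  | tmul f h => simp [dualAct_apply]

theorem dualTensorHom_assoc_tmul (s : Module.Dual k H ⊗[k] H) (h a : H) :
    dualTensorHom k H (H ⊗[k] H) (TensorProduct.assoc k _ H H (s ⊗ₜ h)) a =
      dualTensorHom k H H s a ⊗ₜ h := by
  induction s with
  | zero => simp only [TensorProduct.zero_tmul, map_zero, LinearMap.zero_apply]
  | add x y hx hy => simp only [TensorProduct.add_tmul, map_add, LinearMap.add_apply, hx, hy]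
  | tmul f h' => simp [TensorProduct.smul_tmul']

variable [Module.Finite k H] [Module.Projective k H]

variable (k H) in
/-- The right coaction of `H` on `H*` corresponding to `hit` under `H* ⊗ H ≃ Hom(H, H)`. -/
noncomputable def dualCoact : Module.Dual k H →ₗ[k] Module.Dual k H ⊗[k] H :=
  (dualTensorHomEquiv k H H).symm.toLinearMap ∘ₗ hit

theorem dualTensorHom_dualCoact (g : Module.Dual k H) :
    dualTensorHom k H H (dualCoact k H g) = hit g :=
  (dualTensorHomEquiv k H H).apply_symm_apply _

theorem dualTensorHom_lTensor_dualCoact {N : Type*} [AddCommMonoid N] [Module k N]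
    (φ : H →ₗ[k] N) (g : Module.Dual k H) (a : H) :
    dualTensorHom k H N (φ.lTensor _ (dualCoact k H g)) a = φ (hit g a) := by
  rw [← dualTensorHom_dualCoact]
  exact congr($(dualTensorHom_comp_lTensor φ) (dualCoact k H g) a)

theorem dualTensorHom_assoc_rTensor_dualCoact (t : Module.Dual k H ⊗[k] H) (a : H) :
    dualTensorHom k H (H ⊗[k] H) (TensorProduct.assoc k _ H H ((dualCoact k H).rTensor H t)) a =
      (dualTensorHom k H H t).lTensor H (comul (R := k) a) := by
  induction t with
  | zero => simp only [map_zero, LinearMap.zero_apply, LinearMap.lTensor_zero]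
  | add x y hx hy => simp only [map_add, LinearMap.add_apply, LinearMap.lTensor_add, hx, hy]
  | tmul f h =>
    rw [LinearMap.rTensor_tmul, dualTensorHom_assoc_tmul, dualTensorHom_dualCoact, hit_apply,
      ← (ℛ k a).eq]
    simp [TensorProduct.sum_tmul, TensorProduct.smul_tmul]

variable (k H) in
/-- The Hopf module structure on `H*` whose coinvariants are the left integrals. -/
noncomputable def dualHopfModule : HopfModule k H (Module.Dual k H) where
  act := dualAct k H
  coact := dualCoact k H
  act_one g := by ext a; simp [dualAct_apply]
  act_act g h h' := by ext a; simp [dualAct_apply, antipode_mul_antidistrib, mul_assoc]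
  rTensor_coact_coact g := by
    rw [LinearEquiv.eq_symm_apply]
    apply dualTensorHom_bijective.1
    ext a
    rw [dualTensorHom_assoc_rTensor_dualCoact, dualTensorHom_dualCoact, ← comul_hit,
      dualTensorHom_lTensor_dualCoact]
  lTensor_counit_coact g := by
    apply dualTensorHom_bijective.1
    ext a
    rw [dualTensorHom_lTensor_dualCoact, counit_hit, dualTensorHom_apply, smul_eq_mul, mul_one]
  coact_act g h := by
    apply dualTensorHom_bijective.1
    ext a
    rw [dualTensorHom_dualCoact, dualAct_apply, ← sum_hit_mul_antipode_mul g a (ℛ k h),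
      ← (ℛ k h).eq]
    simp only [map_sum, LinearMap.sum_apply, dualTensorHom_map₂_dualAct, dualTensorHom_dualCoact]

theorem mem_coinvariants_dualHopfModule {f : Module.Dual k H} :
    f ∈ (dualHopfModule k H).coinvariants ↔ ∀ a, hit f a = f a • 1 := by
  rw [HopfModule.mem_coinvariants, ← dualTensorHom_bijective.1.eq_iff, LinearMap.ext_iff]
  exact forall_congr' fun a => by rw [dualHopfModule, dualTensorHom_dualCoact, dualTensorHom_apply]

end DualHopfModule

section LeftIntegrals

theorem conv_apply {k C : Type*} [CommRing k] [AddCommGroup C] [Module k C] [Coalgebra k C]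
    (g f : Module.Dual k C) (a : C) : conv k C g f a = g (hit f a) := by
  simp only [conv, hit_apply, LinearMap.comp_apply]
  rw [← (ℛ k a).eq]
  simp [mul_comm]

variable {k H : Type*} [CommRing k] [Ring H] [HopfAlgebra k H]

theorem forall_conv_eq_smul_iff [Module.Projective k H] {f : Module.Dual k H} :
    (∀ g, conv k H g f = g 1 • f) ↔ ∀ a, hit f a = f a • 1 := by
  constructor
  · intro h a
    rw [← sub_eq_zero, ← Module.forall_dual_apply_eq_zero_iff k]
    intro g
    rw [map_sub, map_smul, ← conv_apply, h, LinearMap.smul_apply, smul_eq_mul, smul_eq_mul,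
      mul_comm, sub_self]
  · intro h g
    ext a
    rw [conv_apply, h, map_smul, LinearMap.smul_apply, smul_eq_mul, smul_eq_mul, mul_comm]

theorem dualTensorHom_comm_lTensor_psiH (J : Submodule k (Module.Dual k H)) (t : H ⊗[k] H)
    (f : J) : dualTensorHom k J H (TensorProduct.comm k _ _ ((psiH k H J).lTensor H t)) f =
      TensorProduct.rid k H (f.1.lTensor H t) := by
  induction t with
  | zero => simp only [map_zero, LinearMap.zero_apply]
  | add s t hs ht => simp only [map_add, LinearMap.add_apply, hs, ht]
  | tmul a b => simp [psiH]

theorem lTensor_psiH_comul {J : Submodule k (Module.Dual k H)} [Module.Finite k J]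
    [Module.Projective k J] (hJ : ∀ f ∈ J, ∀ a, hit f a = f a • 1) (a : H) :
    (psiH k H J).lTensor H (comul a) = 1 ⊗ₜ psiH k H J a := by
  apply (TensorProduct.comm k _ _).injective
  apply dualTensorHom_bijective.1
  ext f
  rw [dualTensorHom_comm_lTensor_psiH, ← hit_apply, hJ f f.2]
  rfl

variable [Module.Finite k H] [Module.Projective k H]

instance invertible_coinvariants_dualHopfModule :
    Module.Invertible k (dualHopfModule k H).coinvariants :=
  invertible_of_tensor_equiv_dual (P := (dualHopfModule k H).coinvariants) (M := H)
    (r := counit) (m := 1) Bialgebra.counit_one (dualHopfModule k H).coinvariantsTensorEquiv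

theorem bijective_psiH_comp_mulRight : Function.Bijective fun a : H =>
    psiH k H (dualHopfModule k H).coinvariants ∘ₗ LinearMap.mulRight k a := by
  let Θ : H →ₗ[k] H →ₗ[k] Module.Dual k (dualHopfModule k H).coinvariants :=
    LinearMap.llcomp k H H _ (psiH k H _) ∘ₗ (LinearMap.mul k H).flip
  have comp_antipode_bijective : Function.Bijective (Θ ∘ₗ antipode k) :=
    bijective_lflip_comp_curry_flip (dualHopfModule k H).coinvariantsTensorEquiv
  have : Module.Finite k (H →ₗ[k] Module.Dual k (dualHopfModule k H).coinvariants) :=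
    .of_surjective _ comp_antipode_bijective.surjective
  exact OrzechProperty.bijective_of_surjective_of_injective (Θ ∘ₗ antipode k) Θ
    comp_antipode_bijective.injective (.of_comp comp_antipode_bijective.surjective)

end LeftIntegrals

/-- A finitely generated projective Hopf `k`-algebra `H` is a `P`-Frobenius algebra for
`P = (∫ℓ_{H*})*`: the map `a ↦ ψ(—·a)` is an isomorphism `H ≅ Hom_k(H,P)`, where
`ψ(a)(q) = q(a)`; moreover `ψ` satisfies `Σ a₍₁₎ ⊗ ψ(a₍₂₎) = 1 ⊗ ψ(a)` in `H ⊗ P`. -/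
theorem hopf_is_pFrobenius (k H : Type*) [CommRing k] [Ring H] [HopfAlgebra k H]
    [Module.Finite k H] [Module.Projective k H]
    (J : Submodule k (Module.Dual k H))
    (hJ : ↑J = {f : Module.Dual k H | ∀ g : Module.Dual k H, conv k H g f = g 1 • f}) :
    Function.Bijective (fun a : H => psiH k H J ∘ₗ LinearMap.mulRight k a) ∧
    ∀ a : H, (LinearMap.lTensor H (psiH k H J)) (Coalgebra.comul (R := k) a)
      = 1 ⊗ₜ[k] psiH k H J a := by
  obtain rfl : J = (dualHopfModule k H).coinvariants := by
    ext f
    rw [mem_coinvariants_dualHopfModule, ← forall_conv_eq_smul_iff, ← SetLike.mem_coe, hJ,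
      Set.mem_ofPred]
  exact ⟨bijective_psiH_comp_mulRight,
    lTensor_psiH_comul fun f hf => mem_coinvariants_dualHopfModule.1 hf⟩
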